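/- arXiv:2401.02904 — 3 statements merged into one kernel-verified Lean document; each statement's English description precedes it below -/
import Mathlib

section
/- Assume the loss has the form ℓ(w,x,y) = ℓ(f_w(x),y) with values in [0,1]. Then the super-sample class-generalization error of class y satisfies |gen_y| ≤ E_{Z_{[2n]}}[(1/n^y) Σ_{i=1}^n sqrt(2·max(𝟙{Y_i^-=y}, 𝟙{Y_i^+=y})·I_{Z_{[2n]}}(f_W(X_i^±);U_i))]. -/
open MeasureTheory ProbabilityTheory
open scoped ENNReal

noncomputable section

open Classical in
/-- Kullback–Leibler divergence: `∞` unless `μ ≪ ν` and the log-likelihood ratio is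
`μ`-integrable. -/
def KL {α : Type*} [MeasurableSpace α] (μ ν : Measure α) : ℝ≥0∞ :=
  if μ ≪ ν ∧ Integrable (llr μ ν) μ then ENNReal.ofReal (∫ x, llr μ ν x ∂μ) else ∞

/-- Fair coin measure on `Bool` (the law of a uniform `{−1,+1}` selector, `true ↔ +1`). -/
def coin : Measure Bool :=
  (2 : ℝ≥0∞)⁻¹ • Measure.dirac true + (2 : ℝ≥0∞)⁻¹ • Measure.dirac false

/-- Disintegrated conditional mutual information `I_z(A;B)` given `Z = z`, defined through
regular conditional distributions: `KL(P_{A,B|Z=z} ‖ P_{A|Z=z} ⊗ P_{B|Z=z})`. -/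
def dCMI {Ω γ α β : Type*} [MeasurableSpace Ω] [MeasurableSpace γ]
    [MeasurableSpace α] [StandardBorelSpace α] [Nonempty α]
    [MeasurableSpace β] [StandardBorelSpace β] [Nonempty β]
    (μ : Measure Ω) [IsFiniteMeasure μ]
    (A : Ω → α) (B : Ω → β) (Z : Ω → γ) (z : γ) : ℝ≥0∞ :=
  KL (condDistrib (fun ω => (A ω, B ω)) Z μ z)
    ((condDistrib A Z μ z).prod (condDistrib B Z μ z))

/-- The super-sample entry selected by `u`, i.e. `z^{u}` (the training sample):
`zz = (z⁻, z⁺)` and `u = true` means `+1`. -/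
def trainSel {𝒵 : Type*} (zz : 𝒵 × 𝒵) (u : Bool) : 𝒵 := if u then zz.2 else zz.1

/-- The super-sample entry not selected by `u`, i.e. `z^{−u}` (the test sample). -/
def testSel {𝒵 : Type*} (zz : 𝒵 × 𝒵) (u : Bool) : 𝒵 := if u then zz.1 else zz.2


/-- Donsker–Varadhan plus Hoeffding. -/
lemma abs_integral_le_KL {α : Type*} [MeasurableSpace α] (P Q : Measure α)
    [IsProbabilityMeasure P] [IsProbabilityMeasure Q] (g : α → ℝ) (hg : Measurable g)
    (hb : ∀ x, g x ∈ Set.Icc (-1 : ℝ) 1) (h0 : ∫ x, g x ∂Q = 0) :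
    ENNReal.ofReal |∫ x, g x ∂P| ≤ (2 * KL P Q) ^ (1 / 2 : ℝ) := by
  unfold KL
  split_ifs with h
  swap
  · simp
  obtain ⟨hac, hint⟩ := h
  set K := ∫ x, llr P Q x ∂P with hK
  set m := ∫ x, g x ∂P with hm
  have hsub := hasSubgaussianMGF_of_mem_Icc_of_integral_eq_zero (μ := Q) (X := g)
    hg.aemeasurable (Filter.Eventually.of_forall hb) h0
  have hexp : Integrable (fun x => Real.exp (m * g x)) Q := hsub.integrable_exp_mul m
  have hgP : Integrable g P :=
    Integrable.of_mem_Icc (-1) 1 hg.aemeasurable (Filter.Eventually.of_forall hb)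
  have hmgP : Integrable (fun x => m * g x) P := hgP.const_mul m
  have h1 := integral_llr_tilted_right hac hmgP hexp hint
  have hac2 : P ≪ Q.tilted (fun x => m * g x) :=
    hac.trans (absolutelyContinuous_tilted hexp)
  have : IsProbabilityMeasure (Q.tilted (fun x => m * g x)) := isProbabilityMeasure_tilted hexp
  have h2 := InformationTheory.integral_llr_add_sub_measure_univ_nonneg hac2
    (integrable_llr_tilted_right hac hmgP hint hexp)
  have h3 : Real.log (∫ x, Real.exp (m * g x) ∂Q) ≤ m ^ 2 / 2 := by
    have h4 := hsub.mgf_le m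
    rw [Real.log_le_iff_le_exp (integral_exp_pos hexp)]
    refine h4.trans (le_of_eq ?_)
    congr 1
    norm_num
  have hle : m ^ 2 ≤ 2 * K := by
    simp only [probReal_univ] at h2
    rw [h1, integral_const_mul] at h2
    nlinarith
  have hK0 : 0 ≤ K := by nlinarith [sq_nonneg m]
  have hm2 : |m| ≤ (2 * K) ^ (1 / 2 : ℝ) := by
    rw [← Real.sqrt_eq_rpow]
    exact Real.abs_le_sqrt hle
  refine (ENNReal.ofReal_le_ofReal hm2).trans (le_of_eq ?_)
  rw [← ENNReal.ofReal_rpow_of_nonneg (by positivity) (by norm_num),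
    ENNReal.ofReal_mul (by norm_num)]
  simp

instance isProb_coin : IsProbabilityMeasure coin := by
  constructor
  simp [coin, ENNReal.inv_two_add_inv_two]

lemma integral_coin (g : Bool → ℝ) : ∫ b, g b ∂coin = (g true + g false) / 2 := by
  unfold coin
  rw [integral_add_measure (Integrable.smul_measure Integrable.of_finite (by simp))
      (Integrable.smul_measure Integrable.of_finite (by simp)),
    integral_smul_measure, integral_smul_measure, integral_dirac, integral_dirac]
  simp
  ring

lemma single_term {Ω γ α : Type*} [MeasurableSpace Ω] [MeasurableSpace γ]
    [MeasurableSpace α] [StandardBorelSpace α] [Nonempty α]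
    (μ : Measure Ω) [IsProbabilityMeasure μ]
    (Z : Ω → γ) (hZ : Measurable Z) (A : Ω → α) (hA : Measurable A)
    (B : Ω → Bool) (hB : Measurable B)
    (hlaw : μ.map (fun ω => (Z ω, B ω)) = (μ.map Z).prod coin)
    (G : γ × (α × Bool) → ℝ) (hG : Measurable G)
    (hb : ∀ p, G p ∈ Set.Icc (-1 : ℝ) 1)
    (hodd : ∀ z a, G (z, (a, true)) + G (z, (a, false)) = 0)
    (M : γ → ℝ≥0∞) (hM : ∀ z, M z = 1 ∨ ∀ p, G (z, p) = 0) :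
    ENNReal.ofReal |∫ ω, G (Z ω, (A ω, B ω)) ∂μ| ≤
      ∫⁻ z, (2 * M z * dCMI μ A B Z z) ^ (1 / 2 : ℝ) ∂(μ.map Z) := by
  have : IsProbabilityMeasure (μ.map Z) := Measure.isProbabilityMeasure_map hZ.aemeasurable
  have hAB : Measurable (fun ω => (A ω, B ω)) := hA.prodMk hB
  have hBc : condDistrib B Z μ =ᵐ[μ.map Z] Kernel.const γ coin := by
    apply condDistrib_ae_eq_of_measure_eq_compProd Z hB.aemeasurable
    rw [hlaw, Measure.compProd_const]
  have h1 : ∫ ω, G (Z ω, (A ω, B ω)) ∂μ =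
      ∫ z, ∫ p, G (z, p) ∂(condDistrib (fun ω => (A ω, B ω)) Z μ z) ∂(μ.map Z) := by
    rw [← Measure.integral_compProd, compProd_map_condDistrib hAB.aemeasurable,
      integral_map (hZ.prodMk hAB).aemeasurable hG.aestronglyMeasurable]
    exact Integrable.of_mem_Icc (-1) 1 hG.aemeasurable (Filter.Eventually.of_forall hb)
  rw [h1, ← Real.enorm_eq_ofReal_abs]
  refine (enorm_integral_le_lintegral_enorm _).trans ?_
  apply lintegral_mono_ae
  filter_upwards [hBc] with z hz
  rw [Real.enorm_eq_ofReal_abs]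
  rcases hM z with h | h
  · rw [h, mul_one]
    unfold dCMI
    refine abs_integral_le_KL _ _ (fun p => G (z, p)) (hG.comp measurable_prodMk_left)
      (fun p => hb _) ?_
    rw [hz, Kernel.const_apply, integral_prod]
    · simp [integral_coin, hodd]
    · exact Integrable.of_mem_Icc (-1) 1 (hG.comp measurable_prodMk_left).aemeasurable
        (Filter.Eventually.of_forall fun p => hb _)
  · simp [h]

lemma sum_lintegral_le {α ι : Type*} [MeasurableSpace α] (μ : Measure α) (s : Finset ι)
    (F : ι → α → ℝ≥0∞) : ∑ i ∈ s, ∫⁻ a, F i a ∂μ ≤ ∫⁻ a, ∑ i ∈ s, F i a ∂μ := by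
  classical
  induction s using Finset.induction_on with
  | empty => simp
  | insert i s hi ih =>
    simp only [Finset.sum_insert hi]
    exact (add_le_add le_rfl ih).trans (le_lintegral_add _ _)

/-- **Theorem 3 (class-f-CMI bound)**: in the super-sample setting with predictions
`f_w(x)` and a bounded loss `ℓ(f_w(x), y) ∈ [0,1]`, the class-generalization error of class
`y` satisfies
`|gen_y| ≤ E_{Z_{[2n]}}[(1/n^y) Σ_i sqrt (2 max(𝟙{Y_i⁻=y},𝟙{Y_i⁺=y}) I_{Z_{[2n]}}(f_W(X_i^±);U_i))]`. -/
theorem class_fCMI_bound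
    {Ω 𝒲 𝒳 𝒴 Yhat : Type*}
    [mΩ : MeasurableSpace Ω] [StandardBorelSpace Ω] [Nonempty Ω]
    [MeasurableSpace 𝒲] [StandardBorelSpace 𝒲] [Nonempty 𝒲]
    [MeasurableSpace 𝒳] [StandardBorelSpace 𝒳]
    [MeasurableSpace 𝒴] [Countable 𝒴] [MeasurableSingletonClass 𝒴] [DecidableEq 𝒴]
    [MeasurableSpace Yhat] [StandardBorelSpace Yhat] [Nonempty Yhat]
    (μ : Measure Ω) [IsProbabilityMeasure μ]
    (n : ℕ) (hn : 0 < n)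
    (PZ : Measure (𝒳 × 𝒴)) [IsProbabilityMeasure PZ]
    (Z : Ω → Fin n → (𝒳 × 𝒴) × (𝒳 × 𝒴)) (hZ : Measurable Z)
    (U : Ω → Fin n → Bool) (hU : Measurable U)
    (W : Ω → 𝒲) (hW : Measurable W)
    (hlaw : μ.map (fun ω => (Z ω, U ω)) =
      (Measure.pi fun _ : Fin n => PZ.prod PZ).prod (Measure.pi fun _ : Fin n => coin))
    (hSle : MeasurableSpace.comap (fun ω (i : Fin n) => trainSel (Z ω i) (U ω i))
        inferInstance ≤ mΩ)
    (hMarkov : CondIndepFun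
      (MeasurableSpace.comap (fun ω (i : Fin n) => trainSel (Z ω i) (U ω i)) inferInstance)
      hSle W (fun ω => (Z ω, U ω)) μ)
    -- the model prediction map and the loss on predictions
    (f : 𝒲 → 𝒳 → Yhat) (hf : Measurable fun p : 𝒲 × 𝒳 => f p.1 p.2)
    (ℓ : Yhat → 𝒴 → ℝ) (hℓ : Measurable fun p : Yhat × 𝒴 => ℓ p.1 p.2)
    (hℓ01 : ∀ p y', ℓ p y' ∈ Set.Icc (0 : ℝ) 1)
    (y : 𝒴) (hy : 0 < PZ (Prod.snd ⁻¹' {y})) :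
    ENNReal.ofReal
        |∫ ω, (1 / ((n : ℝ) * (PZ (Prod.snd ⁻¹' {y})).toReal)) *
            ∑ i, ((if (testSel (Z ω i) (U ω i)).2 = y then
                    ℓ (f (W ω) (testSel (Z ω i) (U ω i)).1) (testSel (Z ω i) (U ω i)).2 else 0) -
                  (if (trainSel (Z ω i) (U ω i)).2 = y then
                    ℓ (f (W ω) (trainSel (Z ω i) (U ω i)).1) (trainSel (Z ω i) (U ω i)).2 else 0))
          ∂μ|
      ≤ ∫⁻ z, ENNReal.ofReal (1 / ((n : ℝ) * (PZ (Prod.snd ⁻¹' {y})).toReal)) *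
            ∑ i, (2 * max (if (z i).1.2 = y then (1 : ℝ≥0∞) else 0)
                          (if (z i).2.2 = y then (1 : ℝ≥0∞) else 0) *
                  dCMI μ (fun ω => (f (W ω) ((Z ω i).1.1), f (W ω) ((Z ω i).2.1)))
                    (fun ω => U ω i) Z z) ^ (1 / 2 : ℝ)
          ∂(μ.map Z) := by
  have hZi : ∀ i, Measurable fun ω => Z ω i := fun i => (measurable_pi_apply i).comp hZ
  have hUi : ∀ i, Measurable fun ω => U ω i := fun i => (measurable_pi_apply i).comp hU
  have hZlaw : μ.map Z = Measure.pi fun _ : Fin n => PZ.prod PZ := by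
    have h := congrArg Measure.fst hlaw
    rwa [Measure.fst_map_prodMk hU, Measure.fst_prod] at h
  have hlawi : ∀ i, μ.map (fun ω => (Z ω, U ω i)) = (μ.map Z).prod coin := by
    intro i
    have h := congrArg (Measure.map (Prod.map id (Function.eval i))) hlaw
    rw [Measure.map_map (by fun_prop) (by fun_prop), ← Measure.map_prod_map _ _ measurable_id
      (measurable_pi_apply i), Measure.map_id,
      (measurePreserving_eval (fun _ : Fin n => coin) i).map_eq, ← hZlaw] at h
    exact h
  let A : Fin n → Ω → Yhat × Yhat := fun i ω => (f (W ω) ((Z ω i).1.1), f (W ω) ((Z ω i).2.1))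
  have hA : ∀ i, Measurable (A i) := fun i =>
    (hf.comp (hW.prodMk (hZi i).fst.fst)).prodMk (hf.comp (hW.prodMk (hZi i).snd.fst))
  let G : Fin n → (Fin n → (𝒳 × 𝒴) × (𝒳 × 𝒴)) × ((Yhat × Yhat) × Bool) → ℝ := fun i p =>
    (if p.2.2 = true then (1 : ℝ) else -1) *
      ((if (p.1 i).1.2 = y then ℓ p.2.1.1 (p.1 i).1.2 else 0) -
       (if (p.1 i).2.2 = y then ℓ p.2.1.2 (p.1 i).2.2 else 0))
  have hG : ∀ i, Measurable (G i) := by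
    intro i
    have hp : Measurable fun p : (Fin n → (𝒳 × 𝒴) × (𝒳 × 𝒴)) × ((Yhat × Yhat) × Bool) => p.1 i :=
      (measurable_pi_apply i).comp measurable_fst
    refine Measurable.mul (Measurable.ite ?_ measurable_const measurable_const)
      (Measurable.sub (Measurable.ite ?_ ?_ measurable_const)
        (Measurable.ite ?_ ?_ measurable_const))
    · exact measurable_snd.snd (measurableSet_singleton true)
    · exact hp.fst.snd (measurableSet_singleton y)
    · exact hℓ.comp (measurable_snd.fst.fst.prodMk hp.fst.snd)
    · exact hp.snd.snd (measurableSet_singleton y)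
    · exact hℓ.comp (measurable_snd.fst.snd.prodMk hp.snd.snd)
  have hGb : ∀ i p, G i p ∈ Set.Icc (-1 : ℝ) 1 := by
    intro i p
    have h1 := hℓ01 p.2.1.1 (p.1 i).1.2
    have h2 := hℓ01 p.2.1.2 (p.1 i).2.2
    simp only [Set.mem_Icc, G] at *
    split_ifs <;> constructor <;> linarith
  have hsingle : ∀ i, ENNReal.ofReal |∫ ω, G i (Z ω, (A i ω, U ω i)) ∂μ| ≤
      ∫⁻ z, (2 * max (if (z i).1.2 = y then (1 : ℝ≥0∞) else 0)
                          (if (z i).2.2 = y then (1 : ℝ≥0∞) else 0) *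
                  dCMI μ (A i) (fun ω => U ω i) Z z) ^ (1 / 2 : ℝ) ∂(μ.map Z) := by
    intro i
    refine single_term μ Z hZ (A i) (hA i) _ (hUi i) (hlawi i) (G i) (hG i) (hGb i) ?_
      (fun z => max (if (z i).1.2 = y then (1 : ℝ≥0∞) else 0)
                          (if (z i).2.2 = y then (1 : ℝ≥0∞) else 0)) ?_
    · intro z a
      simp [G]
    · intro z
      by_cases h1 : (z i).1.2 = y <;> by_cases h2 : (z i).2.2 = y <;> simp [G, h1, h2]
  have hGint : ∀ i, Integrable (fun ω => G i (Z ω, (A i ω, U ω i))) μ := fun i =>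
    Integrable.of_mem_Icc (-1) 1
      ((hG i).comp (hZ.prodMk ((hA i).prodMk (hUi i)))).aemeasurable
      (Filter.Eventually.of_forall fun ω => hGb i _)
  have hLHS : (fun ω => (1 / ((n : ℝ) * (PZ (Prod.snd ⁻¹' {y})).toReal)) *
            ∑ i, ((if (testSel (Z ω i) (U ω i)).2 = y then
                    ℓ (f (W ω) (testSel (Z ω i) (U ω i)).1) (testSel (Z ω i) (U ω i)).2 else 0) -
                  (if (trainSel (Z ω i) (U ω i)).2 = y then
                    ℓ (f (W ω) (trainSel (Z ω i) (U ω i)).1) (trainSel (Z ω i) (U ω i)).2 else 0)))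
      = fun ω => (1 / ((n : ℝ) * (PZ (Prod.snd ⁻¹' {y})).toReal)) *
          ∑ i, G i (Z ω, (A i ω, U ω i)) := by
    funext ω
    congr 1
    refine Finset.sum_congr rfl fun i _ => ?_
    cases h : U ω i <;> simp [G, A, testSel, trainSel]
  rw [hLHS, integral_const_mul, integral_finsetSum _ (fun i _ => hGint i), abs_mul,
    abs_of_nonneg (by positivity), ENNReal.ofReal_mul (by positivity),
    lintegral_const_mul' _ _ ENNReal.ofReal_ne_top]
  gcongr
  refine le_trans ?_ (sum_lintegral_le _ _ _)
  refine (ENNReal.ofReal_le_ofReal (Finset.abs_sum_le_sum_abs _ _)).trans ?_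
  rw [ENNReal.ofReal_sum_of_nonneg (fun i _ => abs_nonneg _)]
  exact Finset.sum_le_sum fun i _ => hsingle i
end
end

section
/- Let (W,X,Y) be jointly distributed random variables, with W and X taking values in standard Borel spaces and Y taking values in a countable set 𝒴. Then Σ_{y: P(Y=y)>0} P(Y=y)·KL(P_{W,X|Y=y} ‖ P_W ⊗ P_{X|Y=y}) = KL(P_{W,X,Y} ‖ P_W ⊗ P_{X,Y}) = I(W;(X,Y)), and consequently, for every σ ≥ 0, Σ_{y: P(Y=y)>0} P(Y=y)·sqrt(2·σ²·KL(P_{W,X|Y=y} ‖ P_W ⊗ P_{X|Y=y})) ≤ sqrt(2·σ²·I(W;(X,Y))); that is, when the subGaussian parameter is the same for all classes, the class-wise KL bound of Corollary 1 is tighter than the individual-sample mutual information bound of Bu et al. -/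
open MeasureTheory ProbabilityTheory
open scoped ENNReal

noncomputable section

lemma KL_eq_klDiv {α : Type*} [MeasurableSpace α] (P R : Measure α)
    [IsProbabilityMeasure P] [IsProbabilityMeasure R] : KL P R = InformationTheory.klDiv P R := by
  unfold KL
  split_ifs with h
  · rw [InformationTheory.klDiv_of_ac_of_integrable h.1 h.2]
    simp
  · symm
    rw [InformationTheory.klDiv_eq_top_iff]
    exact fun h1 h2 => h ⟨h1, h2⟩

lemma lintegral_classes {Ω 𝒴 : Type*} [MeasurableSpace Ω]
    [MeasurableSpace 𝒴] [Countable 𝒴] [MeasurableSingletonClass 𝒴]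
    (μ : Measure Ω) [IsProbabilityMeasure μ]
    (Y : Ω → 𝒴) (hY : Measurable Y) (H : Ω → 𝒴 → ℝ≥0∞) :
    ∫⁻ ω, H ω (Y ω) ∂μ = ∑' y, μ (Y ⁻¹' {y}) * ∫⁻ ω, H ω y ∂(μ[|Y ⁻¹' {y}]) := by
  have hm : ∀ y, MeasurableSet (Y ⁻¹' {y}) := fun y => hY (measurableSet_singleton y)
  have hU : (⋃ y, Y ⁻¹' {y}) = Set.univ := by ext; simp
  have hd : Pairwise (Function.onFun Disjoint fun y => Y ⁻¹' {y}) := by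
    intro a b hab
    exact Disjoint.preimage _ (by simpa using hab)
  rw [← setLIntegral_univ, ← hU, lintegral_iUnion hm hd]
  refine tsum_congr fun y => ?_
  rw [ProbabilityTheory.cond, lintegral_smul_measure, smul_eq_mul, ← mul_assoc]
  rw [setLIntegral_congr_fun (g := fun ω => H ω y) (hm y)
    (fun ω hω => by simp only [Set.mem_preimage, Set.mem_singleton_iff] at hω; simp [hω])]
  by_cases h0 : μ (Y ⁻¹' {y}) = 0
  · rw [Measure.restrict_eq_zero.mpr h0]; simp
  · rw [ENNReal.mul_inv_cancel h0 (measure_ne_top _ _), one_mul]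

lemma lintegral_joint
    {Ω 𝒲 𝒳 𝒴 : Type*} [MeasurableSpace Ω]
    [MeasurableSpace 𝒲] [MeasurableSpace 𝒳]
    [MeasurableSpace 𝒴] [Countable 𝒴] [MeasurableSingletonClass 𝒴]
    (μ : Measure Ω) [IsProbabilityMeasure μ]
    (W : Ω → 𝒲) (hW : Measurable W)
    (X : Ω → 𝒳) (hX : Measurable X)
    (Y : Ω → 𝒴) (hY : Measurable Y)
    (g : 𝒲 × 𝒳 × 𝒴 → ℝ≥0∞) (hg : Measurable g) :
    ∫⁻ z, g z ∂(μ.map fun ω => (W ω, (X ω, Y ω))) =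
      ∑' y, μ (Y ⁻¹' {y}) * ∫⁻ z, g (z.1, (z.2, y))
        ∂((μ[|Y ⁻¹' {y}]).map fun ω => (W ω, X ω)) := by
  rw [lintegral_map hg (by fun_prop)]
  rw [lintegral_classes μ Y hY (fun ω y => g (W ω, (X ω, y)))]
  refine tsum_congr fun y => ?_
  rw [lintegral_map (by fun_prop) (by fun_prop)]

lemma lintegral_indep
    {Ω 𝒲 𝒳 𝒴 : Type*} [MeasurableSpace Ω]
    [MeasurableSpace 𝒲] [MeasurableSpace 𝒳]
    [MeasurableSpace 𝒴] [Countable 𝒴] [MeasurableSingletonClass 𝒴]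
    (μ : Measure Ω) [IsProbabilityMeasure μ]
    (W : Ω → 𝒲) (hW : Measurable W)
    (X : Ω → 𝒳) (hX : Measurable X)
    (Y : Ω → 𝒴) (hY : Measurable Y)
    (g : 𝒲 × 𝒳 × 𝒴 → ℝ≥0∞) (hg : Measurable g) :
    ∫⁻ z, g z ∂((μ.map W).prod (μ.map fun ω => (X ω, Y ω))) =
      ∑' y, μ (Y ⁻¹' {y}) * ∫⁻ z, g (z.1, (z.2, y))
        ∂((μ.map W).prod ((μ[|Y ⁻¹' {y}]).map X)) := by
  have : IsProbabilityMeasure (μ.map W) := Measure.isProbabilityMeasure_map hW.aemeasurable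
  rw [lintegral_prod_symm' _ hg, lintegral_map (hg.lintegral_prod_left') (by fun_prop)]
  rw [lintegral_classes μ Y hY (fun ω y => ∫⁻ w, g (w, (X ω, y)) ∂(μ.map W))]
  refine tsum_congr fun y => ?_
  have hg' : Measurable fun z : 𝒲 × 𝒳 => g (z.1, (z.2, y)) := by fun_prop
  rw [lintegral_prod_symm' _ hg', lintegral_map (hg'.lintegral_prod_left') hX]

lemma klDiv_disintegration {𝒲 𝒳 𝒴 : Type*}
    [MeasurableSpace 𝒲] [MeasurableSpace 𝒳]
    [MeasurableSpace 𝒴] [Countable 𝒴] [MeasurableSingletonClass 𝒴]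
    (p : 𝒴 → ℝ≥0∞) (q r : 𝒴 → Measure (𝒲 × 𝒳)) (Q R : Measure (𝒲 × 𝒳 × 𝒴))
    [IsFiniteMeasure Q] [IsFiniteMeasure R]
    [∀ y, IsFiniteMeasure (q y)] [∀ y, IsFiniteMeasure (r y)]
    (hJ : ∀ g : 𝒲 × 𝒳 × 𝒴 → ℝ≥0∞, Measurable g →
      ∫⁻ z, g z ∂Q = ∑' y, p y * ∫⁻ z, g (z.1, (z.2, y)) ∂(q y))
    (hI : ∀ g : 𝒲 × 𝒳 × 𝒴 → ℝ≥0∞, Measurable g →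
      ∫⁻ z, g z ∂(R) = ∑' y, p y * ∫⁻ z, g (z.1, (z.2, y)) ∂(r y)) :
    ∑' y, p y * InformationTheory.klDiv (q y) (r y) = InformationTheory.klDiv Q R := by
  by_cases hac : ∀ y, p y ≠ 0 → q y ≪ r y
  · let f : 𝒲 × 𝒳 × 𝒴 → ℝ≥0∞ := fun z => (q z.2.2).rnDeriv (r z.2.2) (z.1, z.2.1)
    have hf : Measurable f := by
      have h1 : Measurable fun u : (𝒲 × 𝒳) × 𝒴 => (q u.2).rnDeriv (r u.2) u.1 :=
        measurable_from_prod_countable_left fun y => Measure.measurable_rnDeriv (q y) (r y)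
      exact h1.comp (g := fun u : (𝒲 × 𝒳) × 𝒴 => (q u.2).rnDeriv (r u.2) u.1)
        (f := fun z : 𝒲 × 𝒳 × 𝒴 => ((z.1, z.2.1), z.2.2)) (by fun_prop)
    have hQ : Q = R.withDensity f := by
      refine Measure.ext_of_lintegral _ fun g hg => ?_
      rw [lintegral_withDensity_eq_lintegral_mul _ hf hg, hJ g hg, hI _ (hf.mul hg)]
      refine tsum_congr fun y => ?_
      by_cases h0 : p y = 0
      · simp [h0]
      · congr 1
        have hg' : Measurable fun z : 𝒲 × 𝒳 => g (z.1, (z.2, y)) := by fun_prop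
        conv_lhs => rw [← Measure.withDensity_rnDeriv_eq _ _ (hac y h0)]
        rw [lintegral_withDensity_eq_lintegral_mul _ (Measure.measurable_rnDeriv _ _) hg']
        rfl
    have hQR : Q ≪ R := hQ ▸ withDensity_absolutelyContinuous _ _
    have hrn : Q.rnDeriv R =ᵐ[R] f := by
      rw [hQ]; exact Measure.rnDeriv_withDensity _ hf
    rw [InformationTheory.klDiv_eq_lintegral_klFun_of_ac hQR,
      lintegral_congr_ae (g := fun z => ENNReal.ofReal (InformationTheory.klFun (f z).toReal))
        (by filter_upwards [hrn] with z hz; rw [hz]),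
      hI _ (by fun_prop)]
    refine tsum_congr fun y => ?_
    by_cases h0 : p y = 0
    · simp [h0]
    · rw [InformationTheory.klDiv_eq_lintegral_klFun_of_ac (hac y h0)]
  · have hQR : ¬ Q ≪ R := by
      intro h
      refine hac fun y hy => Measure.AbsolutelyContinuous.mk fun A hA hrA => ?_
      let B : Set (𝒲 × 𝒳 × 𝒴) := {z | (z.1, z.2.1) ∈ A ∧ z.2.2 = y}
      have hB : MeasurableSet B := by
        apply MeasurableSet.inter
        · exact (show Measurable fun z : 𝒲 × 𝒳 × 𝒴 => (z.1, z.2.1) by fun_prop) hA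
        · exact (show Measurable fun z : 𝒲 × 𝒳 × 𝒴 => z.2.2 by fun_prop)
            (measurableSet_singleton y)
      have hm : Measurable (B.indicator (1 : 𝒲 × 𝒳 × 𝒴 → ℝ≥0∞)) :=
        measurable_one.indicator hB
      have e1 : ∀ z : 𝒲 × 𝒳, B.indicator (1 : 𝒲 × 𝒳 × 𝒴 → ℝ≥0∞) (z.1, (z.2, y))
          = A.indicator 1 z := by
        intro z
        have hz : (z.1, (z.2, y)) ∈ B ↔ z ∈ A := ⟨fun h => h.1, fun h => ⟨h, rfl⟩⟩
        by_cases hzA : z ∈ A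
        · rw [Set.indicator_of_mem (hz.mpr hzA), Set.indicator_of_mem hzA]; rfl
        · rw [Set.indicator_of_notMem (fun h => hzA (hz.mp h)), Set.indicator_of_notMem hzA]
      have e2 : ∀ y', y' ≠ y → ∀ z : 𝒲 × 𝒳,
          B.indicator (1 : 𝒲 × 𝒳 × 𝒴 → ℝ≥0∞) (z.1, (z.2, y')) = 0 := by
        intro y' hy' z; simp [B, Set.indicator, hy']
      have hRB : R B = 0 := by
        rw [← lintegral_indicator_one hB, hI _ hm, ENNReal.tsum_eq_zero]
        intro y'
        by_cases hy' : y' = y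
        · subst hy'
          simp_rw [e1]
          rw [lintegral_indicator_one hA, hrA, mul_zero]
        · simp_rw [e2 y' hy']; simp
      have hQB := h hRB
      rw [← lintegral_indicator_one hB, hJ _ hm, ENNReal.tsum_eq_zero] at hQB
      have := hQB y
      simp_rw [e1] at this
      rw [lintegral_indicator_one hA] at this
      exact (mul_eq_zero.mp this).resolve_left hy
    rw [InformationTheory.klDiv_of_not_ac hQR]
    push Not at hac
    obtain ⟨y, hy, hn⟩ := hac
    refine ENNReal.tsum_eq_top_of_eq_top ⟨y, ?_⟩
    rw [InformationTheory.klDiv_of_not_ac hn, ENNReal.mul_top hy]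

lemma tsum_sqrt_le {𝒴 : Type*} [MeasurableSpace 𝒴] [Countable 𝒴] [MeasurableSingletonClass 𝒴]
    (P : Measure 𝒴) [IsProbabilityMeasure P] (k : 𝒴 → ℝ≥0∞) :
    ∑' y, P {y} * k y ^ (1 / 2 : ℝ) ≤ (∑' y, P {y} * k y) ^ (1 / 2 : ℝ) := by
  have h := ENNReal.lintegral_mul_le_Lp_mul_Lq P Real.HolderConjugate.two_two
    (f := fun y => k y ^ (1 / 2 : ℝ)) (g := fun _ => 1)
    (measurable_of_countable _).aemeasurable (measurable_of_countable _).aemeasurable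
  have e : ∀ y, (k y ^ (1 / 2 : ℝ)) ^ (2 : ℝ) = k y := fun y => by
    rw [← ENNReal.rpow_mul]; norm_num
  simp only [Pi.mul_apply, mul_one, e, ENNReal.one_rpow, lintegral_const, measure_univ] at h
  rw [lintegral_countable', lintegral_countable'] at h
  simpa only [mul_comm] using h

/-- **Appendix C.4**: the class-wise conditional KL divergences average (over the label
distribution) exactly to `I(W;(X,Y))`, and consequently, by Jensen's inequality, the
class-wise KL bound of Corollary 1 is tighter than the individual-sample mutual information
bound of Bu et al.  (Summands with `P(Y=y) = 0` contribute `0` since `0 * ∞ = 0` in `ℝ≥0∞`,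
so the `tsum` below coincides with the sum over classes of positive probability.) -/
theorem classwise_KL_decomposition_and_tighter_than_Bu
    {Ω 𝒲 𝒳 𝒴 : Type*} [MeasurableSpace Ω]
    [MeasurableSpace 𝒲] [StandardBorelSpace 𝒲]
    [MeasurableSpace 𝒳] [StandardBorelSpace 𝒳]
    [MeasurableSpace 𝒴] [Countable 𝒴] [MeasurableSingletonClass 𝒴]
    (μ : Measure Ω) [IsProbabilityMeasure μ]
    (W : Ω → 𝒲) (hW : Measurable W)
    (X : Ω → 𝒳) (hX : Measurable X)
    (Y : Ω → 𝒴) (hY : Measurable Y)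
    (σ : ℝ) (hσ : 0 ≤ σ) :
    (∑' y : 𝒴, μ (Y ⁻¹' {y}) *
        KL ((μ[|Y ⁻¹' {y}]).map fun ω => (W ω, X ω))
          ((μ.map W).prod ((μ[|Y ⁻¹' {y}]).map X))
      = KL (μ.map fun ω => (W ω, (X ω, Y ω)))
          ((μ.map W).prod (μ.map fun ω => (X ω, Y ω)))) ∧
    ∑' y : 𝒴, μ (Y ⁻¹' {y}) *
        (ENNReal.ofReal (2 * σ ^ 2) *
            KL ((μ[|Y ⁻¹' {y}]).map fun ω => (W ω, X ω))
              ((μ.map W).prod ((μ[|Y ⁻¹' {y}]).map X))) ^ (1 / 2 : ℝ)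
      ≤ (ENNReal.ofReal (2 * σ ^ 2) *
            KL (μ.map fun ω => (W ω, (X ω, Y ω)))
              ((μ.map W).prod (μ.map fun ω => (X ω, Y ω)))) ^ (1 / 2 : ℝ) := by
  have hJ := lintegral_joint μ W hW X hX Y hY
  have hI := lintegral_indep μ W hW X hX Y hY
  have i1 : IsProbabilityMeasure (μ.map W) := Measure.isProbabilityMeasure_map hW.aemeasurable
  have i2 : IsProbabilityMeasure (μ.map fun ω => (X ω, Y ω)) :=
    Measure.isProbabilityMeasure_map (by fun_prop)
  have i3 : IsProbabilityMeasure (μ.map fun ω => (W ω, (X ω, Y ω))) :=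
    Measure.isProbabilityMeasure_map (by fun_prop)
  have key : ∑' y : 𝒴, μ (Y ⁻¹' {y}) *
        KL ((μ[|Y ⁻¹' {y}]).map fun ω => (W ω, X ω))
          ((μ.map W).prod ((μ[|Y ⁻¹' {y}]).map X))
      = KL (μ.map fun ω => (W ω, (X ω, Y ω)))
          ((μ.map W).prod (μ.map fun ω => (X ω, Y ω))) := by
    rw [KL_eq_klDiv, ← klDiv_disintegration (fun y => μ (Y ⁻¹' {y}))
      (fun y => (μ[|Y ⁻¹' {y}]).map fun ω => (W ω, X ω))
      (fun y => (μ.map W).prod ((μ[|Y ⁻¹' {y}]).map X)) _ _ hJ hI]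
    refine tsum_congr fun y => ?_
    by_cases h0 : μ (Y ⁻¹' {y}) = 0
    · simp [h0]
    · have j0 : IsProbabilityMeasure (μ[|Y ⁻¹' {y}]) := cond_isProbabilityMeasure h0
      have j1 : IsProbabilityMeasure ((μ[|Y ⁻¹' {y}]).map fun ω => (W ω, X ω)) :=
        Measure.isProbabilityMeasure_map (by fun_prop)
      have j2 : IsProbabilityMeasure ((μ[|Y ⁻¹' {y}]).map X) :=
        Measure.isProbabilityMeasure_map (by fun_prop)
      rw [KL_eq_klDiv]
  refine ⟨key, ?_⟩
  rw [← key]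
  have i4 : IsProbabilityMeasure (μ.map Y) := Measure.isProbabilityMeasure_map hY.aemeasurable
  have h := tsum_sqrt_le (μ.map Y) (fun y => ENNReal.ofReal (2 * σ ^ 2) *
            KL ((μ[|Y ⁻¹' {y}]).map fun ω => (W ω, X ω))
              ((μ.map W).prod ((μ[|Y ⁻¹' {y}]).map X)))
  simp only [Measure.map_apply hY (measurableSet_singleton _)] at h
  refine h.trans_eq ?_
  rw [← ENNReal.tsum_mul_left]
  congr 1
  exact tsum_congr fun y => by ring
end
end

section
/- Assume the loss has the form ℓ(w,x,y) = ℓ(f_w(x),y) with values in [0,1]. Then the standard expected generalization error gen = E[(1/n) Σ_{i=1}^n (ℓ(W,Z_i^{−U_i}) − ℓ(W,Z_i^{U_i}))] satisfies |gen| ≤ E_{Y'~P_Y}[E_{Z_{[2n]}}[(1/n^{Y'}) Σ_{i=1}^n sqrt(2·I_{Z_{[2n]}}(Δ_{Y'}L_i;U_i))]]. -/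
open MeasureTheory ProbabilityTheory
open scoped ENNReal

noncomputable section

/-- Transport inequality: if `g` is bounded by one and sub-Gaussian with parameter one under `ρ`,
then its mean under `ν` is at most the square root of twice the divergence. -/
lemma enorm_integral_le_KL {α : Type*} [MeasurableSpace α] (ν ρ : Measure α)
    [IsProbabilityMeasure ν] [IsProbabilityMeasure ρ] (g : α → ℝ) (hg : Measurable g)
    (hg1 : ∀ x, |g x| ≤ 1)
    (hmgf : ∀ m : ℝ, ∫⁻ x, ENNReal.ofReal (Real.exp (m * g x)) ∂ρ
      ≤ ENNReal.ofReal (Real.exp (m ^ 2 / 2))) :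
    ‖∫ x, g x ∂ν‖ₑ ≤ (2 * KL ν ρ) ^ (1 / 2 : ℝ) := by
  unfold KL
  split_ifs with h
  swap
  · simp [ENNReal.mul_top]
  obtain ⟨hac, hintg⟩ := h
  set m := ∫ x, g x ∂ν with hm
  have hgi : Integrable g ν :=
    Integrable.of_bound hg.aestronglyMeasurable 1 (Filter.Eventually.of_forall hg1)
  set F : α → ℝ := fun x => Real.exp (m * g x - m ^ 2 / 2) * (ρ.rnDeriv ν x).toReal with hF
  have hFnn : ∀ x, 0 ≤ F x := fun x => by positivity
  have hFm : Measurable F := by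
    have := Measure.measurable_rnDeriv ρ ν
    fun_prop
  have hFl : ∫⁻ x, ENNReal.ofReal (F x) ∂ν ≤ 1 := by
    calc ∫⁻ x, ENNReal.ofReal (F x) ∂ν
        ≤ ∫⁻ x, ρ.rnDeriv ν x * ENNReal.ofReal (Real.exp (m * g x - m ^ 2 / 2)) ∂ν := by
          apply lintegral_mono
          intro x
          simp only [hF]
          rw [ENNReal.ofReal_mul (by positivity), mul_comm]
          gcongr
          exact ENNReal.ofReal_toReal_le
      _ = ∫⁻ x, ENNReal.ofReal (Real.exp (m * g x - m ^ 2 / 2)) ∂(ν.withDensity (ρ.rnDeriv ν)) := by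
          rw [lintegral_withDensity_eq_lintegral_mul _ (Measure.measurable_rnDeriv ρ ν)
            (by fun_prop)]
          rfl
      _ ≤ ∫⁻ x, ENNReal.ofReal (Real.exp (m * g x - m ^ 2 / 2)) ∂ρ :=
          lintegral_mono' (Measure.withDensity_rnDeriv_le ρ ν) le_rfl
      _ = ENNReal.ofReal (Real.exp (-(m ^ 2 / 2))) *
            ∫⁻ x, ENNReal.ofReal (Real.exp (m * g x)) ∂ρ := by
          rw [← lintegral_const_mul _ (by fun_prop)]
          congr with x
          rw [← ENNReal.ofReal_mul (by positivity), ← Real.exp_add]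
          congr 2
          ring
      _ ≤ ENNReal.ofReal (Real.exp (-(m ^ 2 / 2))) * ENNReal.ofReal (Real.exp (m ^ 2 / 2)) := by
          gcongr
          exact hmgf m
      _ = 1 := by
          rw [← ENNReal.ofReal_mul (by positivity), ← Real.exp_add]
          simp
  have hFi : Integrable F ν := by
    refine ⟨hFm.aestronglyMeasurable, ?_⟩
    rw [hasFiniteIntegral_iff_ofReal (Filter.Eventually.of_forall hFnn)]
    exact hFl.trans_lt ENNReal.one_lt_top
  have hF1 : ∫ x, F x ∂ν ≤ 1 := by
    rw [integral_eq_lintegral_of_nonneg_ae (Filter.Eventually.of_forall hFnn)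
      hFm.aestronglyMeasurable]
    simpa using ENNReal.toReal_mono ENNReal.one_ne_top hFl
  have hkey : ∫ x, (m * g x - m ^ 2 / 2 + 1 - F x) ∂ν ≤ ∫ x, llr ν ρ x ∂ν := by
    apply integral_mono_ae
    · exact (((hgi.const_mul m).sub (integrable_const _)).add (integrable_const _)).sub hFi
    · exact hintg
    · filter_upwards [exp_neg_llr hac] with x hx
      have h1 := Real.add_one_le_exp (m * g x - m ^ 2 / 2 - llr ν ρ x)
      rw [sub_eq_add_neg _ (llr ν ρ x), Real.exp_add, hx] at h1
      simp only [hF]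
      linarith
  have hcalc : ∫ x, (m * g x - m ^ 2 / 2 + 1 - F x) ∂ν = m ^ 2 / 2 + 1 - ∫ x, F x ∂ν := by
    have i1 : Integrable (fun x => m * g x) ν := hgi.const_mul m
    have i2 : Integrable (fun x => m * g x - m ^ 2 / 2) ν := i1.sub (integrable_const _)
    have i3 : Integrable (fun x => m * g x - m ^ 2 / 2 + 1) ν := i2.add (integrable_const _)
    rw [integral_sub i3 hFi, integral_add i2 (integrable_const _),
      integral_sub i1 (integrable_const _), integral_const_mul, ← hm]
    simp
    ring
  have hfin : m ^ 2 ≤ 2 * ∫ x, llr ν ρ x ∂ν := by linarith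
  have h2 : (2 : ℝ≥0∞) = ENNReal.ofReal 2 := by simp
  rw [h2, ← ENNReal.ofReal_mul (by norm_num), ENNReal.ofReal_rpow_of_nonneg
    ((sq_nonneg m).trans hfin) (by norm_num), ← Real.sqrt_eq_rpow, Real.enorm_eq_ofReal_abs]
  exact ENNReal.ofReal_le_ofReal (Real.abs_le_sqrt hfin)

instance coin_isProb : IsProbabilityMeasure coin := by
  constructor
  simp [coin, ENNReal.inv_two_add_inv_two]

/-- The sign of a selector. -/
def sgn (b : Bool) : ℝ := if b then 1 else -1

/-- Clipping to `[-1,1]`. -/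
def clip (a : ℝ) : ℝ := max (-1) (min a 1)

lemma measurable_clip : Measurable clip := by unfold clip; fun_prop

lemma abs_clip (a : ℝ) : |clip a| ≤ 1 := by
  unfold clip
  rw [abs_le]
  exact ⟨le_max_left _ _, max_le (by norm_num) (min_le_right _ _)⟩

lemma clip_eq {a : ℝ} (h : |a| ≤ 1) : clip a = a := by
  rw [abs_le] at h
  unfold clip
  rw [min_eq_left h.2, max_eq_right h.1]

lemma measurable_sgn : Measurable sgn := measurable_from_top

lemma abs_sgn (b : Bool) : |sgn b| = 1 := by cases b <;> simp [sgn]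

lemma mgf_coin (α : Measure ℝ) [IsProbabilityMeasure α] (m : ℝ) :
    ∫⁻ x : ℝ × Bool, ENNReal.ofReal (Real.exp (m * (sgn x.2 * clip x.1))) ∂(α.prod coin)
      ≤ ENNReal.ofReal (Real.exp (m ^ 2 / 2)) := by
  have hs := measurable_sgn
  have hc := measurable_clip
  rw [lintegral_prod _ (by fun_prop)]
  calc _ ≤ ∫⁻ _, ENNReal.ofReal (Real.exp (m ^ 2 / 2)) ∂α := by
        apply lintegral_mono
        intro a
        have h0 : ((2 : ℝ≥0∞)⁻¹) = ENNReal.ofReal (2⁻¹) := by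
          rw [ENNReal.ofReal_inv_of_pos (by norm_num)]; simp
        simp only [coin, lintegral_add_measure, lintegral_smul_measure, lintegral_dirac,
          smul_eq_mul, h0]
        rw [← ENNReal.ofReal_mul (by norm_num), ← ENNReal.ofReal_mul (by norm_num),
          ← ENNReal.ofReal_add (by positivity) (by positivity)]
        apply ENNReal.ofReal_le_ofReal
        have h1 := Real.cosh_le_exp_half_sq (m * clip a)
        rw [Real.cosh_eq] at h1
        have h2 : Real.exp ((m * clip a) ^ 2 / 2) ≤ Real.exp (m ^ 2 / 2) := by
          apply Real.exp_le_exp.2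
          have h3 : clip a ^ 2 ≤ 1 := (sq_le_one_iff_abs_le_one _).2 (abs_clip a)
          have := mul_le_mul_of_nonneg_left h3 (sq_nonneg m)
          nlinarith
        simp only [sgn, if_true, Bool.false_eq_true, if_false, one_mul, neg_mul, mul_neg]
        linarith
    _ = _ := by simp

/-- One-coordinate bound. -/
lemma coord_bound {Ω γ : Type*} [MeasurableSpace Ω] [MeasurableSpace γ]
    (μ : Measure Ω) [IsProbabilityMeasure μ] (Z : Ω → γ) (hZ : Measurable Z)
    (A : Ω → ℝ) (hA : Measurable A) (hA1 : ∀ ω, |A ω| ≤ 1)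
    (B : Ω → Bool) (hB : Measurable B)
    (hlaw : μ.map (fun ω => (Z ω, B ω)) = (μ.map Z).prod coin) :
    ∃ h : γ → ℝ≥0∞, AEMeasurable h (μ.map Z) ∧
      (∀ᵐ z ∂(μ.map Z), h z ≤ (2 * dCMI μ A B Z z) ^ (1 / 2 : ℝ)) ∧
      ‖∫ ω, sgn (B ω) * A ω ∂μ‖ₑ ≤ ∫⁻ z, h z ∂(μ.map Z) := by
  have hs := measurable_sgn
  have hc := measurable_clip
  have : IsProbabilityMeasure (μ.map Z) := Measure.isProbabilityMeasure_map hZ.aemeasurable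
  set g : ℝ × Bool → ℝ := fun x => sgn x.2 * clip x.1 with hgdef
  have hg : Measurable g := by fun_prop
  have hg1 : ∀ x, |g x| ≤ 1 := fun x => by
    simp only [hgdef, abs_mul, abs_sgn, one_mul]; exact abs_clip _
  set κ := condDistrib (fun ω => (A ω, B ω)) Z μ with hκ
  have hAB : Measurable fun ω => (A ω, B ω) := hA.prodMk hB
  have hcomp : (μ.map Z) ⊗ₘ condDistrib (fun ω => (A ω, B ω)) Z μ =
      μ.map fun ω => (Z ω, (A ω, B ω)) := compProd_map_condDistrib hAB.aemeasurable
  have hGi : Integrable (fun p : γ × (ℝ × Bool) => g p.2) ((μ.map Z) ⊗ₘ κ) :=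
    Integrable.of_bound (hg.comp measurable_snd).aestronglyMeasurable 1
      (Filter.Eventually.of_forall fun p => hg1 p.2)
  have hE : ∫ ω, sgn (B ω) * A ω ∂μ = ∫ z, ∫ x, g x ∂(κ z) ∂(μ.map Z) := by
    have h1 := Measure.integral_compProd hGi
    rw [← h1, hκ, hcomp, integral_map (hZ.prodMk hAB).aemeasurable
      (Measurable.aestronglyMeasurable (f := fun x : γ × ℝ × Bool => g x.2)
        (hg.comp measurable_snd))]
    simp only [hgdef]
    congr with ω
    rw [clip_eq (hA1 ω)]
  refine ⟨fun z => ‖∫ x, g x ∂(κ z)‖ₑ, ?_, ?_, ?_⟩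
  · exact (hg.stronglyMeasurable.integral_kernel (κ := κ)).measurable.enorm.aemeasurable
  · have hcB : condDistrib B Z μ =ᵐ[μ.map Z] Kernel.const γ coin := by
      apply condDistrib_ae_eq_of_measure_eq_compProd _ hB.aemeasurable
      rw [hlaw, Measure.compProd_const]
    filter_upwards [hcB] with z hz
    unfold dCMI
    rw [hz, Kernel.const_apply]
    exact enorm_integral_le_KL _ _ g hg hg1 (mgf_coin _)
  · rw [hE]
    exact enorm_integral_le_lintegral_enorm _

/-- **Corollary 2 (label-dependent Δ_YL-CMI bound for the standard generalization error)**: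
in the super-sample setting with predictions and a bounded loss `ℓ(f_w(x),y) ∈ [0,1]`,
the standard expected generalization error satisfies
`|gen| ≤ E_{Y'∼P_Y}[E_{Z_{[2n]}}[(1/n^{Y'}) Σ_i sqrt (2 I_{Z_{[2n]}}(Δ_{Y'}L_i;U_i))]]`. -/
theorem standard_gen_deltaL_CMI_bound
    {Ω 𝒲 𝒳 𝒴 Yhat : Type*}
    [mΩ : MeasurableSpace Ω] [StandardBorelSpace Ω] [Nonempty Ω]
    [MeasurableSpace 𝒲] [StandardBorelSpace 𝒲] [Nonempty 𝒲]
    [MeasurableSpace 𝒳] [StandardBorelSpace 𝒳]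
    [MeasurableSpace 𝒴] [Countable 𝒴] [MeasurableSingletonClass 𝒴] [DecidableEq 𝒴]
    [MeasurableSpace Yhat] [StandardBorelSpace Yhat] [Nonempty Yhat]
    (μ : Measure Ω) [IsProbabilityMeasure μ]
    (n : ℕ) (hn : 0 < n)
    (PZ : Measure (𝒳 × 𝒴)) [IsProbabilityMeasure PZ]
    (Z : Ω → Fin n → (𝒳 × 𝒴) × (𝒳 × 𝒴)) (hZ : Measurable Z)
    (U : Ω → Fin n → Bool) (hU : Measurable U)
    (W : Ω → 𝒲) (hW : Measurable W)
    (hlaw : μ.map (fun ω => (Z ω, U ω)) =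
      (Measure.pi fun _ : Fin n => PZ.prod PZ).prod (Measure.pi fun _ : Fin n => coin))
    (hSle : MeasurableSpace.comap (fun ω (i : Fin n) => trainSel (Z ω i) (U ω i))
        inferInstance ≤ mΩ)
    (hMarkov : CondIndepFun
      (MeasurableSpace.comap (fun ω (i : Fin n) => trainSel (Z ω i) (U ω i)) inferInstance)
      hSle W (fun ω => (Z ω, U ω)) μ)
    (f : 𝒲 → 𝒳 → Yhat) (hf : Measurable fun p : 𝒲 × 𝒳 => f p.1 p.2)
    (ℓ : Yhat → 𝒴 → ℝ) (hℓ : Measurable fun p : Yhat × 𝒴 => ℓ p.1 p.2)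
    (hℓ01 : ∀ p y', ℓ p y' ∈ Set.Icc (0 : ℝ) 1) :
    ENNReal.ofReal
        |∫ ω, (1 / (n : ℝ)) *
            ∑ i, (ℓ (f (W ω) (testSel (Z ω i) (U ω i)).1) (testSel (Z ω i) (U ω i)).2 -
                  ℓ (f (W ω) (trainSel (Z ω i) (U ω i)).1) (trainSel (Z ω i) (U ω i)).2) ∂μ|
      ≤ ∫⁻ y, (∫⁻ z, ENNReal.ofReal (1 / ((n : ℝ) * (PZ (Prod.snd ⁻¹' {y})).toReal)) *
            ∑ i, (2 *
                  dCMI μ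
                    (fun ω =>
                      (if (Z ω i).1.2 = y then ℓ (f (W ω) ((Z ω i).1.1)) ((Z ω i).1.2) else 0) -
                        (if (Z ω i).2.2 = y then ℓ (f (W ω) ((Z ω i).2.1)) ((Z ω i).2.2) else 0))
                    (fun ω => U ω i) Z z) ^ (1 / 2 : ℝ)
            ∂(μ.map Z))
          ∂(PZ.map Prod.snd) := by
  classical
  have hsg := measurable_sgn
  have hZi : ∀ i, Measurable fun ω => Z ω i := fun i => (measurable_pi_apply i).comp hZ
  have hUi : ∀ i, Measurable fun ω => U ω i := fun i => (measurable_pi_apply i).comp hU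
  set a1 : Fin n → Ω → ℝ := fun i ω => ℓ (f (W ω) ((Z ω i).1.1)) ((Z ω i).1.2) with ha1
  set a2 : Fin n → Ω → ℝ := fun i ω => ℓ (f (W ω) ((Z ω i).2.1)) ((Z ω i).2.2) with ha2
  have ma1 : ∀ i, Measurable (a1 i) := fun i => hℓ.comp
    ((hf.comp (hW.prodMk (hZi i).fst.fst)).prodMk (hZi i).fst.snd)
  have ma2 : ∀ i, Measurable (a2 i) := fun i => hℓ.comp
    ((hf.comp (hW.prodMk (hZi i).snd.fst)).prodMk (hZi i).snd.snd)
  set D : 𝒴 → Fin n → Ω → ℝ := fun y i ω =>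
    (if (Z ω i).1.2 = y then a1 i ω else 0) - (if (Z ω i).2.2 = y then a2 i ω else 0) with hD
  have mD : ∀ y i, Measurable (D y i) := by
    intro y i
    refine Measurable.sub (Measurable.ite ?_ (ma1 i) measurable_const)
      (Measurable.ite ?_ (ma2 i) measurable_const)
    · exact (hZi i).fst.snd (measurableSet_singleton y)
    · exact (hZi i).snd.snd (measurableSet_singleton y)
  have D1 : ∀ y i ω, |D y i ω| ≤ 1 := by
    intro y i ω
    have h1 := hℓ01 (f (W ω) ((Z ω i).1.1)) ((Z ω i).1.2)
    have h2 := hℓ01 (f (W ω) ((Z ω i).2.1)) ((Z ω i).2.2)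
    simp only [hD, ha1, ha2, abs_le]
    split_ifs <;> constructor <;> linarith [h1.1, h1.2, h2.1, h2.2]
  have hZlaw : μ.map Z = Measure.pi fun _ : Fin n => PZ.prod PZ := by
    have := congrArg Measure.fst hlaw
    rwa [Measure.fst_map_prodMk hU, Measure.fst_prod] at this
  have hZU : ∀ i, μ.map (fun ω => (Z ω, U ω i)) = (μ.map Z).prod coin := by
    intro i
    have h1 : (μ.map (fun ω => (Z ω, U ω))).map (Prod.map id (fun u : Fin n → Bool => u i))
        = μ.map (fun ω => (Z ω, U ω i)) := by
      rw [Measure.map_map (by fun_prop) (by fun_prop)]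
      rfl
    rw [← h1, hlaw, ← Measure.map_prod_map _ _ measurable_id (measurable_pi_apply i),
      Measure.map_id, hZlaw]
    congr 1
    exact (measurePreserving_eval (fun _ : Fin n => coin) i).map_eq
  -- null labels contribute nothing
  have hnull : ∀ y, PZ (Prod.snd ⁻¹' {y}) = 0 → ∀ i, ∫ ω, sgn (U ω i) * D y i ω ∂μ = 0 := by
    intro y hy i
    have hm : μ.map (fun ω => Z ω i) = PZ.prod PZ := by
      have h1 : (μ.map Z).map (Function.eval i) = μ.map (fun ω => Z ω i) := by
        rw [Measure.map_map (measurable_pi_apply i) hZ]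
        rfl
      rw [← h1, hZlaw]
      exact (measurePreserving_eval (fun _ : Fin n => PZ.prod PZ) i).map_eq
    have e1 : ∀ᵐ ω ∂μ, (Z ω i).1.2 ≠ y := by
      have h2 : μ.map (fun ω => (Z ω i).1) = PZ := by
        have h3 := congrArg Measure.fst hm
        rw [Measure.fst_prod, Measure.fst, Measure.map_map measurable_fst (hZi i)] at h3
        exact h3
      rw [← h2, Measure.map_apply (hZi i).fst
        (measurable_snd (measurableSet_singleton y))] at hy
      rw [ae_iff]
      simp only [ne_eq, not_not]
      exact hy
    have e2 : ∀ᵐ ω ∂μ, (Z ω i).2.2 ≠ y := by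
      have h2 : μ.map (fun ω => (Z ω i).2) = PZ := by
        have h3 := congrArg Measure.snd hm
        rw [Measure.snd_prod, Measure.snd, Measure.map_map measurable_snd (hZi i)] at h3
        exact h3
      rw [← h2, Measure.map_apply (hZi i).snd
        (measurable_snd (measurableSet_singleton y))] at hy
      rw [ae_iff]
      simp only [ne_eq, not_not]
      exact hy
    apply integral_eq_zero_of_ae
    filter_upwards [e1, e2] with ω w1 w2
    simp [hD, w1, w2]
  -- decomposition over labels
  have hsum : ∀ i, ∫ ω, sgn (U ω i) * (a1 i ω - a2 i ω) ∂μ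
      = ∑' y, ∫ ω, sgn (U ω i) * D y i ω ∂μ := by
    intro i
    rw [← integral_tsum]
    · congr with ω
      have h1 := hasSum_ite_eq ((Z ω i).1.2) (a1 i ω)
      have h2 := hasSum_ite_eq ((Z ω i).2.2) (a2 i ω)
      have h3 := ((h1.sub h2).mul_left (sgn (U ω i))).tsum_eq
      rw [← h3]
      simp only [hD, eq_comm]
    · intro y
      exact ((hsg.comp (hUi i)).mul (mD y i)).aestronglyMeasurable
    · have hme : ∀ y, AEMeasurable (fun ω => ‖sgn (U ω i) * D y i ω‖ₑ) μ :=
        fun y => ((hsg.comp (hUi i)).mul (mD y i)).enorm.aemeasurable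
      rw [← lintegral_tsum hme]
      refine ne_top_of_le_ne_top (b := ∫⁻ _, 2 ∂μ) (by simp) (lintegral_mono fun ω => ?_)
      calc ∑' y, ‖sgn (U ω i) * D y i ω‖ₑ
          ≤ ∑' y, ((if y = (Z ω i).1.2 then (1 : ℝ≥0∞) else 0)
              + (if y = (Z ω i).2.2 then 1 else 0)) := by
            apply ENNReal.tsum_le_tsum
            intro y
            by_cases c : y = (Z ω i).1.2 ∨ y = (Z ω i).2.2
            · have : ‖sgn (U ω i) * D y i ω‖ₑ ≤ 1 := by
                rw [Real.enorm_eq_ofReal_abs, abs_mul, abs_sgn, one_mul]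
                exact ENNReal.ofReal_le_one.2 (D1 y i ω)
              refine this.trans ?_
              rcases c with c | c
              · rw [if_pos c]; exact le_self_add
              · rw [if_pos c]; exact le_add_self
            · push Not at c
              simp [hD, c.1.symm, c.2.symm]
        _ = 2 := by
            rw [ENNReal.tsum_add, tsum_ite_eq, tsum_ite_eq]
            norm_num
  have hintg : ∀ i, Integrable (fun ω => sgn (U ω i) * (a1 i ω - a2 i ω)) μ := by
    intro i
    refine Integrable.of_bound
      ((hsg.comp (hUi i)).mul ((ma1 i).sub (ma2 i))).aestronglyMeasurable 1
      (Filter.Eventually.of_forall fun ω => ?_)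
    rw [Real.norm_eq_abs, abs_mul, abs_sgn, one_mul, abs_le]
    have h1 := hℓ01 (f (W ω) ((Z ω i).1.1)) ((Z ω i).1.2)
    have h2 := hℓ01 (f (W ω) ((Z ω i).2.1)) ((Z ω i).2.2)
    simp only [ha1, ha2]
    constructor <;> linarith [h1.1, h1.2, h2.1, h2.2]
  have hgen : ∫ ω, (1 / (n : ℝ)) *
      ∑ i, (ℓ (f (W ω) (testSel (Z ω i) (U ω i)).1) (testSel (Z ω i) (U ω i)).2 -
        ℓ (f (W ω) (trainSel (Z ω i) (U ω i)).1) (trainSel (Z ω i) (U ω i)).2) ∂μ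
      = (1 / (n : ℝ)) * ∑ i, ∑' y, ∫ ω, sgn (U ω i) * D y i ω ∂μ := by
    rw [integral_const_mul]
    congr 1
    simp_rw [← hsum]
    rw [← integral_finsetSum _ (fun i _ => hintg i)]
    congr with ω
    refine Finset.sum_congr rfl fun i _ => ?_
    cases hu : U ω i <;> simp [testSel, trainSel, sgn, ha1, ha2]
  rw [hgen, ← Real.enorm_eq_ofReal_abs, enorm_mul, lintegral_countable']
  have hn' : (0 : ℝ) < n := by exact_mod_cast hn
  calc ‖1 / (n : ℝ)‖ₑ * ‖∑ i, ∑' y, ∫ ω, sgn (U ω i) * D y i ω ∂μ‖ₑ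
      ≤ ‖1 / (n : ℝ)‖ₑ * ∑ i, ∑' y, ‖∫ ω, sgn (U ω i) * D y i ω ∂μ‖ₑ := by
        gcongr
        exact (enorm_sum_le _ _).trans (Finset.sum_le_sum fun i _ => enorm_tsum_le_tsum_enorm)
    _ = ∑' y, ‖1 / (n : ℝ)‖ₑ * ∑ i, ‖∫ ω, sgn (U ω i) * D y i ω ∂μ‖ₑ := by
        rw [ENNReal.tsum_mul_left, Summable.tsum_finsetSum (fun _ _ => ENNReal.summable)]
    _ ≤ _ := by
        apply ENNReal.tsum_le_tsum
        intro y
        rw [Measure.map_apply measurable_snd (measurableSet_singleton y)]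
        by_cases hy : PZ (Prod.snd ⁻¹' {y}) = 0
        · simp [hnull y hy]
        have hp : 0 < (PZ (Prod.snd ⁻¹' {y})).toReal :=
          ENNReal.toReal_pos hy (measure_ne_top _ _)
        choose h hm hle hI using fun i => coord_bound μ Z hZ (D y i) (mD y i) (D1 y i)
          (fun ω => U ω i) (hUi i) (hZU i)
        have hlow : ENNReal.ofReal (1 / ((n : ℝ) * (PZ (Prod.snd ⁻¹' {y})).toReal)) *
            ∑ i, ‖∫ ω, sgn (U ω i) * D y i ω ∂μ‖ₑ ≤
            ∫⁻ z, ENNReal.ofReal (1 / ((n : ℝ) * (PZ (Prod.snd ⁻¹' {y})).toReal)) *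
              ∑ i, (2 * dCMI μ (D y i) (fun ω => U ω i) Z z) ^ (1 / 2 : ℝ) ∂(μ.map Z) := by
          calc _ ≤ ENNReal.ofReal (1 / ((n : ℝ) * (PZ (Prod.snd ⁻¹' {y})).toReal)) *
                ∑ i, ∫⁻ z, h i z ∂(μ.map Z) := by
                gcongr with i
                exact hI i
            _ = ∫⁻ z, ENNReal.ofReal (1 / ((n : ℝ) * (PZ (Prod.snd ⁻¹' {y})).toReal)) *
                ∑ i, h i z ∂(μ.map Z) := by
                rw [lintegral_const_mul' _ _ ENNReal.ofReal_ne_top,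
                  lintegral_finsetSum' _ (fun i _ => hm i)]
            _ ≤ _ := by
                apply lintegral_mono_ae
                filter_upwards [ae_all_iff.2 hle] with z hz
                gcongr with i
                exact hz i
        refine le_trans (le_of_eq ?_) (mul_le_mul_left hlow (PZ (Prod.snd ⁻¹' {y})))
        rw [mul_right_comm]
        congr 1
        conv_rhs => rw [← ENNReal.ofReal_toReal (measure_ne_top PZ (Prod.snd ⁻¹' {y}))]
        rw [ENNReal.toReal_ofReal hp.le, ← ENNReal.ofReal_mul (by positivity),
          Real.enorm_eq_ofReal_abs, abs_of_pos (by positivity)]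
        congr 1
        field_simp
end
end
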